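/- Let p be an odd prime, s ≥ 1 an integer, ε ∈ {+1, −1}, and r ≥ 2 an integer such that 2r divides p^s + ε. Let λ = exp(2πi/(2r)) and η = −i(λ − λ^{−1})/√(2r) ∈ ℂ. Then η^{p^s} ≡ −ε·χ^s·η (mod p) in B_r, where χ is the Legendre symbol of −2r modulo p; that is, η^{p^s} + ε·χ^s·η ∈ p·B_r. (Lemma 7 of the paper.) -/

import Mathlib

open Complex Real

theorem aux_delta {R : Type*} [CommRing R] (p s : ℕ) [Fact p.Prime] (hodd : Odd p) (a : ℤ)
    (ha : (a : ZMod p) ≠ 0) (d : R) (hd : d ^ 2 * (a : R) = 1) :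
    (p : R) ∣ d ^ (p ^ s) - ((legendreSym p a : ℤ) : R) ^ s * d := by
  have hχ2 : ((legendreSym p a : ℤ) : R) ^ 2 = 1 := by
    have := legendreSym.sq_one p ha
    exact_mod_cast congrArg (Int.cast : ℤ → R) this
  have hE : (p : R) ∣ (a : R) ^ (p / 2) - ((legendreSym p a : ℤ) : R) := by
    have h1 : ((a ^ (p / 2) - legendreSym p a : ℤ) : ZMod p) = 0 := by
      push_cast
      rw [legendreSym.eq_pow, sub_self]
    rw [ZMod.intCast_zmod_eq_zero_iff_dvd] at h1
    have := map_dvd (Int.castRingHom R) h1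
    simpa using this
  generalize ((legendreSym p a : ℤ) : R) = c at *
  obtain ⟨m, hm⟩ := hodd
  have hm2 : p / 2 = m := by omega
  rw [hm2] at hE
  have hcp : c ^ p = c := by
    rw [hm, pow_succ, pow_mul, hχ2, one_pow, one_mul]
  have hinv : (d ^ 2) ^ m * (a : R) ^ m = 1 := by rw [← mul_pow, hd, one_pow]
  have hdp : (p : R) ∣ d ^ p - c * d := by
    have : d ^ p - c * d = -(d * (d ^ 2) ^ m * c) * ((a : R) ^ m - c) := by
      have h3 : d ^ p = (d ^ 2) ^ m * d := by rw [hm, pow_succ, pow_mul]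
      rw [h3]
      linear_combination (-(d ^ 2) ^ m * d) * hχ2 + (d * c) * hinv
    rw [this]
    exact hE.mul_left _
  induction s with
  | zero => simp
  | succ s ih =>
    have h1 : (p : R) ∣ (d ^ (p ^ s)) ^ p - (c ^ s * d) ^ p :=
      ih.trans (sub_dvd_pow_sub_pow _ _ p)
    have h2 : (c ^ s * d) ^ p = c ^ s * d ^ p := by
      rw [mul_pow, ← pow_mul, mul_comm s p, pow_mul, hcp]
    rw [h2, ← pow_mul, ← pow_succ] at h1
    have := dvd_add h1 (hdp.mul_left (c ^ s))
    convert this using 1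
    ring

theorem aux_main {R : Type*} [CommRing R] (p s r : ℕ) [Fact p.Prime] (hodd : Odd p) (hs : 1 ≤ s)
    (ε : ℤ) (hε : ε = 1 ∨ ε = -1)
    (hdiv : (2 * (r : ℤ)) ∣ ((p : ℤ) ^ s + ε)) (d x y : R) (hxy : x * y = 1)
    (hx : x ^ (2 * r) = 1) (hd : d ^ 2 * ((-(2 * r) : ℤ) : R) = 1) :
    (p : R) ∣ (-d * (x - y)) ^ (p ^ s) +
      (ε : R) * ((legendreSym p (-(2 * r)) : ℤ) : R) ^ s * (-d * (x - y)) := by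
  have hp : p.Prime := Fact.out
  have ha : ((-(2 * r) : ℤ) : ZMod p) ≠ 0 := by
    intro h
    rw [ZMod.intCast_zmod_eq_zero_iff_dvd, dvd_neg] at h
    have h1 : (p : ℤ) ∣ (p : ℤ) ^ s + ε := h.trans hdiv
    have h2 : (p : ℤ) ∣ ε := (dvd_add_right (dvd_pow_self _ (by omega))).1 h1
    have h3 : IsUnit (p : ℤ) := isUnit_of_dvd_unit h2 (by rcases hε with h | h <;> simp [h])
    exact (Nat.prime_iff_prime_int.1 hp).not_isUnit h3
  have hδ := aux_delta p s hodd _ ha d hd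
  generalize ((legendreSym p (-(2 * r)) : ℤ) : R) = c at *
  have hoq : Odd (p ^ s) := hodd.pow
  obtain ⟨z, hz⟩ := exists_add_pow_prime_pow_eq hp x (-y) s
  rw [← sub_eq_add_neg, hoq.neg_pow] at hz
  have hy : y ^ (2 * r) = 1 := by
    have : (x * y) ^ (2 * r) = 1 := by rw [hxy, one_pow]
    rwa [mul_pow, hx, one_mul] at this
  have hq : x ^ (p ^ s) - y ^ (p ^ s) = -(ε : R) * (x - y) := by
    have hpos : 1 ≤ p ^ s := Nat.one_le_pow _ _ hp.pos
    rcases hε with rfl | rfl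
    · have h1 : 2 * r ∣ p ^ s + 1 := by exact_mod_cast hdiv
      obtain ⟨k, hk⟩ := h1
      have e1 : x ^ (p ^ s) * x = 1 := by rw [← pow_succ, hk, pow_mul, hx, one_pow]
      have e2 : y ^ (p ^ s) * y = 1 := by rw [← pow_succ, hk, pow_mul, hy, one_pow]
      push_cast
      linear_combination y * e1 - x * e2 + (y ^ (p ^ s) - x ^ (p ^ s)) * hxy
    · have h1 : 2 * r ∣ p ^ s - 1 := by
        zify [hpos]
        simpa [sub_eq_add_neg] using hdiv
      obtain ⟨k, hk⟩ := h1
      have hk' : p ^ s = 2 * r * k + 1 := by omega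
      rw [hk', pow_succ, pow_succ, pow_mul x (2 * r) k, pow_mul y (2 * r) k, hx, hy]
      push_cast
      simp
  rw [mul_pow, hz, hoq.neg_pow]
  obtain ⟨w, hw⟩ := hδ
  refine ⟨(ε : R) * (x - y) * w - d ^ (p ^ s) * x * (-y) * z, ?_⟩
  linear_combination (-d ^ (p ^ s)) * hq + (ε : R) * (x - y) * hw

/-- Lemma 7: if `2r` divides `p^s + ε` with `ε = ±1` (`p` an odd prime,
`s ≥ 1`, `r ≥ 2`) and `η = -i(λ - λ⁻¹)/√(2r)`, then
`η^{p^s} ≡ -ε χ^s η (mod p)` in `B_r`, where `χ` is the Legendre symbol of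
`-2r` modulo `p` and `B_r` is the smallest subring of `ℂ` containing `1/(2r)`
and all algebraic integers. -/
theorem stmt_5 (p s r : ℕ) [Fact p.Prime] (hodd : Odd p) (hs : 1 ≤ s) (hr : 2 ≤ r)
    (ε : ℤ) (hε : ε = 1 ∨ ε = -1)
    (hdiv : (2 * (r : ℤ)) ∣ ((p : ℤ) ^ s + ε))
    (lam η : ℂ) (hlam : lam = Complex.exp (2 * Real.pi * Complex.I / (2 * r)))
    (hη : η = -Complex.I * (lam - lam⁻¹) / (Real.sqrt (2 * r) : ℂ)) :
    ∃ z ∈ Subring.closure (insert ((2 * (r : ℂ)))⁻¹ {x : ℂ | IsIntegral ℤ x}),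
      η ^ (p ^ s) + (ε : ℂ) * ((legendreSym p (-(2 * r)) : ℤ) : ℂ) ^ s * η
        = (p : ℂ) * z := by
  set B := Subring.closure (insert ((2 * (r : ℂ)))⁻¹ {x : ℂ | IsIntegral ℤ x}) with hB
  have hr0 : (r : ℂ) ≠ 0 := by
    have : r ≠ 0 := by omega
    exact_mod_cast this
  have h2r : (2 * (r : ℂ)) ≠ 0 := mul_ne_zero two_ne_zero hr0
  have hinv : (2 * (r : ℂ))⁻¹ ∈ B := Subring.subset_closure (Set.mem_insert _ _)
  have hint : ∀ x : ℂ, IsIntegral ℤ x → x ∈ B := fun x hx =>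
    Subring.subset_closure (Set.mem_insert_of_mem _ hx)
  have hS : ((Real.sqrt (2 * r) : ℝ) : ℂ) ^ 2 = 2 * r := by
    have : (Real.sqrt (2 * r)) ^ 2 = 2 * r := Real.sq_sqrt (by positivity)
    exact_mod_cast this
  set S : ℂ := ((Real.sqrt (2 * r) : ℝ) : ℂ) with hSdef
  have hS0 : S ≠ 0 := by
    intro h
    rw [h] at hS
    exact h2r (by rw [← hS]; simp)
  have hlamr : lam ^ (2 * r) = 1 := by
    rw [hlam, ← Complex.exp_nat_mul]
    push_cast
    rw [mul_div_cancel₀ _ h2r, Complex.exp_two_pi_mul_I]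
  have hlam0 : lam ≠ 0 := by rw [hlam]; exact Complex.exp_ne_zero _
  have hinvr : lam⁻¹ ^ (2 * r) = 1 := by rw [inv_pow, hlamr, inv_one]
  have hpos : 0 < 2 * r := by omega
  have hxB : lam ∈ B := hint _ (IsIntegral.of_pow hpos (by rw [hlamr]; exact isIntegral_one))
  have hyB : lam⁻¹ ∈ B := hint _ (IsIntegral.of_pow hpos (by rw [hinvr]; exact isIntegral_one))
  have hIB : Complex.I ∈ B := hint _ (IsIntegral.of_pow (n := 2) two_pos (by
    rw [Complex.I_sq]; exact isIntegral_one.neg))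
  have hSB : S ∈ B := hint _ (IsIntegral.of_pow (n := 2) two_pos (by
    rw [hS]; exact_mod_cast (isIntegral_algebraMap (R := ℤ) (A := ℂ) (x := ((2 * r : ℕ) : ℤ)))))
  have hdB : Complex.I * S * (2 * (r : ℂ))⁻¹ ∈ B := B.mul_mem (B.mul_mem hIB hSB) hinv
  have hdeq : Complex.I * S * (2 * (r : ℂ))⁻¹ = Complex.I / S := by
    rw [← hS]
    field_simp
  obtain ⟨z, hz⟩ := aux_main (R := B) p s r hodd hs ε hε hdiv ⟨_, hdB⟩ ⟨lam, hxB⟩ ⟨lam⁻¹, hyB⟩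
    (by ext; simp [hlam0]) (by ext; simpa using hlamr)
    (by
      ext
      push_cast
      rw [hdeq, div_pow, hS, Complex.I_sq]
      field_simp
      rfl)
  refine ⟨z, z.2, ?_⟩
  have h := congrArg (Subtype.val) hz
  push_cast at h
  rw [hdeq] at h
  have he : η = -(Complex.I / S) * (lam - lam⁻¹) := by rw [hη]; ring
  rw [he]
  exact h
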